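/- arXiv:2111.01782 — 2 statements merged into one kernel-verified Lean document; each statement's English description precedes it below -/
import Mathlib

section
/- Let A ∈ ℤ^{m×3}, b ∈ ℤ^m with P(A,b) ∩ ℤ³ = {0} and P(A,b) full-dimensional, and let α ∈ ℤ³ be nonzero. Define Δ(A,α) := max over pairs of rows aᵢ, aⱼ of A of |det(α, aᵢ, aⱼ)|. Then for every x ∈ P(A,b), αᵀx < √2 · Δ(A,α). -/
open Matrix

open MeasureTheory

/-!
Suppose `√2 * Δ ≤ |⟨α, x⟩|` for some `x` in the polyhedron. Consider the cylinder `C` of the points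
`z` with `|⟨α, z⟩| < |⟨α, x⟩|` whose translate along `x` into the plane `α^⊥` satisfies
`|⟨a k, ·⟩| < 1` for all `k`. An integer point `z` of `C`, replaced by `-z` if necessary, satisfies
`⟨a k, z⟩ < t * b k + 1` with `0 ≤ t = ⟨α, z⟩ / ⟨α, x⟩ < 1`, hence `⟨a k, z⟩ ≤ b k`; so it is `0`,
and by Minkowski's theorem it suffices to show that `C` has volume larger than `8`.

Modulo `α`, express the rows in the basis of two rows attaining `Δ`. The coordinate vectors `u k`
then have pairwise determinants at most `1` in absolute value, and the base of `C` becomes the polar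
of the `± u k`. Let `σ` be the maximum of `|u k 0 + u k 1|`. The polar contains the octagon spanned
by `± (1, 0)`, `± (0, 1)`, `± (1/σ, 1/σ)` and `± (-s, t)`, where `s, t ≥ 0` and `s + t = σ`; its
area is `σ + 2/σ ≥ 2 * √2`, and equality is impossible because `σ` is rational.
-/

section Minkowski

lemma exists_int_ne_zero_mem_of_two_pow_card_lt_volume {n : Type*} [Fintype n] {s : Set (n → ℝ)}
    (hneg : ∀ w ∈ s, -w ∈ s) (hconv : Convex ℝ s) (hvol : 2 ^ Fintype.card n < volume s) :
    ∃ z : n → ℤ, z ≠ 0 ∧ Int.cast ∘ z ∈ s := by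
  classical
  let B := Pi.basisFun ℝ n
  have hdomain : volume (ZSpan.fundamentalDomain B) = 1 := by
    simp [B, ZSpan.fundamentalDomain_pi_basisFun, volume_pi_pi]
  have : Countable (Submodule.span ℤ (Set.range B)).toAddSubgroup :=
    inferInstanceAs (Countable (Submodule.span ℤ (Set.range B)))
  obtain ⟨⟨x, hx⟩, hx0, hxs⟩ := exists_ne_zero_mem_lattice_of_measure_mul_two_pow_lt_measure
    (ZSpan.isAddFundamentalDomain' B volume) hneg hconv
    (by rwa [hdomain, one_mul, Module.finrank_fintype_fun_eq_card])
  choose z hz using (B.mem_span_iff_repr_mem ℤ x).1 hx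
  obtain rfl : Int.cast ∘ z = x := funext hz
  refine ⟨z, ?_, hxs⟩
  rintro rfl
  exact hx0 (Subtype.ext (by ext; simp))

lemma exists_int_ne_zero_dotProduct_nonneg_mem {n : Type*} [Fintype n] {s : Set (n → ℝ)}
    (v : n → ℝ) (hneg : ∀ w ∈ s, -w ∈ s) (hconv : Convex ℝ s)
    (hvol : 2 ^ Fintype.card n < volume s) :
    ∃ z : n → ℤ, z ≠ 0 ∧ 0 ≤ v ⬝ᵥ (Int.cast ∘ z) ∧ Int.cast ∘ z ∈ s := by
  obtain ⟨z, hz0, hz⟩ := exists_int_ne_zero_mem_of_two_pow_card_lt_volume hneg hconv hvol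
  rcases le_total 0 (v ⬝ᵥ (Int.cast ∘ z)) with hsign | hsign
  · exact ⟨z, hz0, hsign, hz⟩
  · have hcast : (Int.cast ∘ (-z) : n → ℝ) = -(Int.cast ∘ z) := funext fun t => Int.cast_neg (z t)
    refine ⟨-z, neg_ne_zero.2 hz0, ?_, hcast ▸ hneg _ hz⟩
    rw [hcast, dotProduct_neg]
    exact neg_nonneg.2 hsign

end Minkowski

lemma volume_cylinder {n : ℕ} (s : Set ℝ) (t : Set (Fin n → ℝ)) :
    volume {z : Fin (n + 1) → ℝ | z 0 ∈ s ∧ Fin.tail z ∈ t} = volume s * volume t := by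
  rw [← Measure.prod_prod, ← Measure.volume_eq_prod,
    ← (volume_preserving_piFinSuccAbove (fun _ => ℝ) 0).measure_preimage_equiv]
  rfl

section OpenPolar

variable {ι n : Type*} [Fintype n] {u : ι → n → ℝ}

/-- The interior of the polar of the symmetric family `± u k`, for a finite family `u`. -/
def openPolar (u : ι → n → ℝ) : Set (n → ℝ) := {w | ∀ k, |u k ⬝ᵥ w| < 1}

lemma neg_mem_openPolar {w : n → ℝ} (hw : w ∈ openPolar u) : -w ∈ openPolar u := fun k => by
  simpa only [dotProduct_neg, abs_neg] using hw k

lemma convex_openPolar : Convex ℝ (openPolar u) := by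
  intro v hv w hw a b ha hb hab k
  have hball := convex_ball (0 : ℝ) 1 (mem_ball_zero_iff.2 (hv k)) (mem_ball_zero_iff.2 (hw k))
    ha hb hab
  rwa [mem_ball_zero_iff, Real.norm_eq_abs, ← dotProduct_smul, ← dotProduct_smul,
    ← dotProduct_add] at hball

end OpenPolar

section OpenTriangle

/-- The open triangle with vertices `0`, `v` and `w`, a segment when `v` and `w` are parallel. -/
def openTriangle {E : Type*} [AddCommGroup E] [Module ℝ E] (v w : E) : Set E :=
  {z | ∃ a b : ℝ, 0 < a ∧ 0 < b ∧ a + b < 1 ∧ a • v + b • w = z}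

lemma openTriangle_subset_openPolar {ι n : Type*} [Fintype n] {u : ι → n → ℝ} {v w : n → ℝ}
    (hv : ∀ k, |u k ⬝ᵥ v| ≤ 1) (hw : ∀ k, |u k ⬝ᵥ w| ≤ 1) :
    openTriangle v w ⊆ openPolar u := by
  rintro _ ⟨a, b, ha, hb, hab, rfl⟩ k
  calc |u k ⬝ᵥ (a • v + b • w)| = |a * (u k ⬝ᵥ v) + b * (u k ⬝ᵥ w)| := by
        simp only [dotProduct_add, dotProduct_smul, smul_eq_mul]
    _ ≤ a * |u k ⬝ᵥ v| + b * |u k ⬝ᵥ w| := by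
        refine (abs_add_le _ _).trans_eq ?_
        rw [abs_mul, abs_mul, abs_of_pos ha, abs_of_pos hb]
    _ ≤ a * 1 + b * 1 := by gcongr <;> simp only [hv k, hw k]
    _ < 1 := by linarith

lemma volume_standard_triangle :
    volume {z : Fin 2 → ℝ | 0 < z 0 ∧ 0 < z 1 ∧ z 0 + z 1 < 1} = ENNReal.ofReal (1 / 2) := by
  have hregion : {z : Fin 2 → ℝ | 0 < z 0 ∧ 0 < z 1 ∧ z 0 + z 1 < 1} =
      MeasurableEquiv.finTwoArrow ⁻¹'
        regionBetween (fun _ => 0) (fun x => 1 - x) (Set.Ioo 0 1) := by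
    ext z
    change _ ↔ z 0 ∈ Set.Ioo 0 1 ∧ z 1 ∈ Set.Ioo 0 (1 - z 0)
    simp only [Set.mem_ofPred_eq, Set.mem_Ioo]
    constructor
    · rintro ⟨h0, h1, hsum⟩
      exact ⟨⟨h0, by linarith⟩, h1, by linarith⟩
    · rintro ⟨⟨h0, -⟩, h1, hsum⟩
      exact ⟨h0, h1, by linarith⟩
  have hintegral : ∫ x in Set.Ioo (0 : ℝ) 1, (1 - x - 0) = 1 / 2 := by
    rw [← integral_Ioc_eq_integral_Ioo, ← intervalIntegral.integral_of_le zero_le_one]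
    simp only [sub_zero]
    rw [intervalIntegral.integral_sub intervalIntegrable_const
      intervalIntegral.intervalIntegrable_id, integral_id]
    norm_num
  rw [hregion, (volume_preserving_finTwoArrow ℝ).measure_preimage_equiv, Measure.volume_eq_prod,
    volume_regionBetween_eq_integral]
  · exact congrArg _ hintegral
  · exact integrableOn_zero
  · exact (Continuous.integrableOn_Icc (by fun_prop)).mono_set Set.Ioo_subset_Icc_self
  · exact measurableSet_Ioo
  · intro x hx
    linarith [hx.2]

end OpenTriangle

section PlanarDet

/-- The `2 × 2` determinant with columns `v` and `w`. -/
def planarDet (v w : Fin 2 → ℝ) : ℝ := v 0 * w 1 - v 1 * w 0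

/-- The open cone from `v` counterclockwise to `w`, for two vectors at an angle at most `π`. -/
def openCone (v w : Fin 2 → ℝ) : Set (Fin 2 → ℝ) := {z | 0 < planarDet v z ∧ 0 < planarDet z w}

variable {K : Set (Fin 2 → ℝ)} {v w p : Fin 2 → ℝ}

lemma planarDet_self (v : Fin 2 → ℝ) : planarDet v v = 0 := by
  unfold planarDet; ring

lemma neg_planarDet (v w : Fin 2 → ℝ) : -planarDet v w = planarDet w v := by
  unfold planarDet; ring

lemma planarDet_neg_right (v w : Fin 2 → ℝ) : planarDet v (-w) = planarDet w v := by
  simp only [planarDet, Pi.neg_apply]; ring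

lemma planarDet_smul_add_smul_right (v p q : Fin 2 → ℝ) (a b : ℝ) :
    planarDet v (a • p + b • q) = a * planarDet v p + b * planarDet v q := by
  simp only [planarDet, Pi.add_apply, Pi.smul_apply, smul_eq_mul]; ring

lemma planarDet_smul_add_smul_left (p q w : Fin 2 → ℝ) (a b : ℝ) :
    planarDet (a • p + b • q) w = a * planarDet p w + b * planarDet q w := by
  simp only [planarDet, Pi.add_apply, Pi.smul_apply, smul_eq_mul]; ring

lemma planarDet_mul_planarDet (v p z w : Fin 2 → ℝ) :
    planarDet v p * planarDet z w =
      planarDet z p * planarDet v w + planarDet v z * planarDet p w := by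
  unfold planarDet; ring

lemma measurableSet_planarDet_pos (v : Fin 2 → ℝ) : MeasurableSet {z | 0 < planarDet v z} := by
  unfold planarDet
  exact measurableSet_lt (by fun_prop) (by fun_prop)

lemma volume_openTriangle (v w : Fin 2 → ℝ) :
    volume (openTriangle v w) = ENNReal.ofReal (|planarDet v w| / 2) := by
  have himage : openTriangle v w =
      toLin' !![v 0, w 0; v 1, w 1] '' {z | 0 < z 0 ∧ 0 < z 1 ∧ z 0 + z 1 < 1} := by
    have hcomb (z : Fin 2 → ℝ) : toLin' !![v 0, w 0; v 1, w 1] z = z 0 • v + z 1 • w := by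
      ext t
      fin_cases t <;> simp [vecHead, vecTail] <;> ring
    ext z
    constructor
    · rintro ⟨a, b, ha, hb, hab, rfl⟩
      exact ⟨![a, b], ⟨ha, hb, hab⟩, hcomb _⟩
    · rintro ⟨c, ⟨h0, h1, hsum⟩, rfl⟩
      exact ⟨c 0, c 1, h0, h1, hsum, (hcomb c).symm⟩
  rw [himage, Measure.addHaar_image_linearMap, LinearMap.det_toLin', det_fin_two_of,
    volume_standard_triangle, ← ENNReal.ofReal_mul (abs_nonneg _), mul_one_div, planarDet,
    mul_comm (w 0)]

lemma openTriangle_subset_openCone (hvw : 0 < planarDet v w) :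
    openTriangle v w ⊆ openCone v w := by
  rintro _ ⟨a, b, ha, hb, -, rfl⟩
  constructor
  · rw [planarDet_smul_add_smul_right, planarDet_self]
    positivity
  · rw [planarDet_smul_add_smul_left, planarDet_self]
    positivity

lemma ofReal_planarDet_div_two_le_volume (hK : openTriangle v w ⊆ K) :
    ENNReal.ofReal (planarDet v w / 2) ≤ volume (K ∩ openCone v w) := by
  rcases le_or_gt (planarDet v w) 0 with hvw | hvw
  · rw [ENNReal.ofReal_of_nonpos (by linarith)]
    exact zero_le
  · rw [← abs_of_pos hvw, ← volume_openTriangle]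
    exact measure_mono (Set.subset_inter hK (openTriangle_subset_openCone hvw))

lemma openCone_union_openCone_subset (hvw : 0 < planarDet v w) (hvp : 0 ≤ planarDet v p)
    (hpw : 0 ≤ planarDet p w) : openCone v p ∪ openCone p w ⊆ openCone v w := by
  rintro z (⟨hvz, hzp⟩ | ⟨hpz, hzw⟩)
  · refine ⟨hvz, pos_of_mul_pos_right (?_ : 0 < planarDet v p * planarDet z w) hvp⟩
    rw [planarDet_mul_planarDet]
    positivity
  · refine ⟨pos_of_mul_pos_left (?_ : 0 < planarDet v z * planarDet p w) hpw, hzw⟩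
    rw [planarDet_mul_planarDet]
    positivity

lemma volume_inter_openCone_add_le (hvw : 0 < planarDet v w) (hvp : 0 ≤ planarDet v p)
    (hpw : 0 ≤ planarDet p w) :
    volume (K ∩ openCone v p) + volume (K ∩ openCone p w) ≤ volume (K ∩ openCone v w) := by
  have hsub := openCone_union_openCone_subset hvw hvp hpw
  rw [← measure_inter_add_sdiff (K ∩ openCone v w) (measurableSet_planarDet_pos p), add_comm]
  refine add_le_add (measure_mono ?_) (measure_mono ?_)
  · rintro z ⟨hzK, hz⟩
    exact ⟨⟨hzK, hsub (.inr hz)⟩, hz.1⟩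
  · rintro z ⟨hzK, hz⟩
    refine ⟨⟨hzK, hsub (.inl hz)⟩, fun hpz : 0 < planarDet p z => ?_⟩
    linarith [hz.2, neg_planarDet p z]

lemma two_mul_volume_inter_openCone_add_le (hK : ∀ z ∈ K, -z ∈ K) (v w : Fin 2 → ℝ) :
    2 * (volume (K ∩ openCone v w) + volume (K ∩ openCone w (-v))) ≤ volume K := by
  let H : Set (Fin 2 → ℝ) := {z | 0 < planarDet v z}
  have hsplit : volume (K ∩ openCone v w) + volume (K ∩ openCone w (-v)) ≤ volume (K ∩ H) := by
    rw [← measure_inter_add_sdiff (K ∩ H) (measurableSet_planarDet_pos w), add_comm]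
    refine add_le_add (measure_mono ?_) (measure_mono ?_)
    · rintro z ⟨hzK, hwz, hz⟩
      exact ⟨⟨hzK, by rwa [planarDet_neg_right] at hz⟩, hwz⟩
    · rintro z ⟨hzK, hvz, hzw⟩
      refine ⟨⟨hzK, hvz⟩, fun hwz : 0 < planarDet w z => ?_⟩
      linarith [neg_planarDet w z]
  have hopposite : volume (K ∩ H) ≤ volume (K \ H) := by
    rw [← Measure.measure_neg volume (K ∩ H)]
    refine measure_mono fun z ⟨hzK, hz⟩ => ⟨neg_neg z ▸ hK _ hzK, fun hvz : 0 < planarDet v z => ?_⟩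
    have : 0 < planarDet v (-z) := hz
    rw [planarDet_neg_right] at this
    linarith [neg_planarDet v z]
  calc _ ≤ 2 * volume (K ∩ H) := by gcongr
    _ ≤ volume (K ∩ H) + volume (K \ H) := by rw [two_mul]; gcongr
    _ = volume K := measure_inter_add_sdiff K (measurableSet_planarDet_pos v)

lemma ofReal_planarDet_add_le_volume_inter_openCone (hvw : 0 < planarDet v w)
    (hvp : 0 ≤ planarDet v p) (hpw : 0 ≤ planarDet p w)
    (hKv : openTriangle v p ⊆ K) (hKw : openTriangle p w ⊆ K) :
    ENNReal.ofReal ((planarDet v p + planarDet p w) / 2) ≤ volume (K ∩ openCone v w) := by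
  rw [add_div, ENNReal.ofReal_add (by positivity) (by positivity)]
  exact (add_le_add (ofReal_planarDet_div_two_le_volume hKv)
    (ofReal_planarDet_div_two_le_volume hKw)).trans (volume_inter_openCone_add_le hvw hvp hpw)

end PlanarDet

section PlanarPolar

variable {ι : Type*} {u : ι → Fin 2 → ℝ}

lemma ofReal_le_volume_openPolar {s t y : ℝ} (hs : 0 ≤ s) (ht : 0 ≤ t) (hy : 0 ≤ y)
    (h0 : ∀ k, |u k 0| ≤ 1) (h1 : ∀ k, |u k 1| ≤ 1)
    (hp : ∀ k, |u k ⬝ᵥ ![-s, t]| ≤ 1) (hq : ∀ k, |u k ⬝ᵥ ![y, y]| ≤ 1) :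
    ENNReal.ofReal (s + t + 2 * y) ≤ volume (openPolar u) := by
  have he (k) : |u k ⬝ᵥ ![1, 0]| ≤ 1 := by simpa [-dotProduct_cons, vec2_dotProduct] using h0 k
  have hf (k) : |u k ⬝ᵥ ![0, 1]| ≤ 1 := by simpa [-dotProduct_cons, vec2_dotProduct] using h1 k
  have hne (k) : |u k ⬝ᵥ -![1, 0]| ≤ 1 := by simpa only [dotProduct_neg, abs_neg] using he k
  have hright : ENNReal.ofReal y ≤ volume (openPolar u ∩ openCone ![1, 0] ![0, 1]) := by
    have h := ofReal_planarDet_add_le_volume_inter_openCone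
      (v := ![1, 0]) (w := ![0, 1]) (p := ![y, y])
      (by simp [planarDet]) (by simpa [planarDet]) (by simpa [planarDet])
      (openTriangle_subset_openPolar he hq) (openTriangle_subset_openPolar hq hf)
    simpa [planarDet] using h
  have hleft : ENNReal.ofReal ((s + t) / 2) ≤
      volume (openPolar u ∩ openCone ![0, 1] (-![1, 0])) := by
    have h := ofReal_planarDet_add_le_volume_inter_openCone
      (v := ![0, 1]) (w := -![1, 0]) (p := ![-s, t])
      (by simp [planarDet]) (by simpa [planarDet]) (by simpa [planarDet])
      (openTriangle_subset_openPolar hf hp) (openTriangle_subset_openPolar hp hne)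
    simpa [planarDet] using h
  calc ENNReal.ofReal (s + t + 2 * y)
      = 2 * (ENNReal.ofReal y + ENNReal.ofReal ((s + t) / 2)) := by
        rw [← ENNReal.ofReal_add hy (by positivity), ← ENNReal.ofReal_ofNat 2,
          ← ENNReal.ofReal_mul zero_le_two]
        congr 1
        ring
    _ ≤ 2 * (volume (openPolar u ∩ openCone ![1, 0] ![0, 1]) +
          volume (openPolar u ∩ openCone ![0, 1] (-![1, 0]))) := by gcongr
    _ ≤ volume (openPolar u) :=
        two_mul_volume_inter_openCone_add_le (fun _ => neg_mem_openPolar) _ _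

lemma abs_apply_le_one_of_abs_planarDet_le_one {i j : ι} (hi : u i = ![1, 0]) (hj : u j = ![0, 1])
    (hu : ∀ k l, |planarDet (u k) (u l)| ≤ 1) (k : ι) : |u k 0| ≤ 1 ∧ |u k 1| ≤ 1 := by
  have hkj := hu k j
  have hik := hu i k
  rw [hj] at hkj
  rw [hi] at hik
  exact ⟨by simpa [planarDet] using hkj, by simpa [planarDet] using hik⟩

lemma exists_neg_quadrant_mem_polar (h0 : ∀ k, |u k 0| ≤ 1) (h1 : ∀ k, |u k 1| ≤ 1)
    (hu : ∀ k l, |planarDet (u k) (u l)| ≤ 1) (l : ι) (hl : 1 ≤ |u l 0 + u l 1|) :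
    ∃ s t : ℝ, 0 ≤ s ∧ 0 ≤ t ∧ s + t = |u l 0 + u l 1| ∧ ∀ k, |u k ⬝ᵥ ![-s, t]| ≤ 1 := by
  by_cases hsign : 0 ≤ u l 0 * u l 1
  · -- A quarter turn of `u l` lies in the polar, since pairing with it is `planarDet (u l)`.
    refine ⟨|u l 1|, |u l 0|, abs_nonneg _, abs_nonneg _, ?_, fun k => ?_⟩
    · rw [add_comm, (abs_add_eq_add_abs_iff _ _).2 (mul_nonneg_iff.1 hsign)]
    · refine le_of_eq_of_le ?_ (hu k l)
      rcases mul_nonneg_iff.1 hsign with ⟨hl0, hl1⟩ | ⟨hl0, hl1⟩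
      · rw [abs_of_nonneg hl0, abs_of_nonneg hl1, ← abs_neg]
        simp only [planarDet, vec2_dotProduct, cons_val_zero, cons_val_one]
        ring_nf
      · rw [abs_of_nonpos hl0, abs_of_nonpos hl1]
        simp only [planarDet, vec2_dotProduct, cons_val_zero, cons_val_one]
        ring_nf
  · refine ⟨0, 1, le_rfl, zero_le_one, ?_,
      fun k => by simpa [-dotProduct_cons, vec2_dotProduct] using h1 k⟩
    refine (zero_add _).trans (hl.antisymm (abs_le.2 ?_))
    have := abs_le.1 (h0 l)
    have := abs_le.1 (h1 l)
    rcases mul_neg_iff.1 (not_le.1 hsign) with ⟨_, _⟩ | ⟨_, _⟩ <;> constructor <;> linarith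

theorem exists_ofReal_add_two_div_le_volume_openPolar [Finite ι] {i j : ι}
    (hi : u i = ![1, 0]) (hj : u j = ![0, 1]) (hu : ∀ k l, |planarDet (u k) (u l)| ≤ 1) :
    ∃ l, 0 < |u l 0 + u l 1| ∧
      ENNReal.ofReal (|u l 0 + u l 1| + 2 / |u l 0 + u l 1|) ≤ volume (openPolar u) := by
  have h0 k := (abs_apply_le_one_of_abs_planarDet_le_one hi hj hu k).1
  have h1 k := (abs_apply_le_one_of_abs_planarDet_le_one hi hj hu k).2
  have : Nonempty ι := ⟨i⟩
  obtain ⟨l, hmax⟩ := Finite.exists_max fun k => |u k 0 + u k 1|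
  have hl : 1 ≤ |u l 0 + u l 1| := by simpa [hi] using hmax i
  obtain ⟨s, t, hs, ht, hst, hp⟩ := exists_neg_quadrant_mem_polar h0 h1 hu l hl
  have hq k : |u k ⬝ᵥ ![1 / |u l 0 + u l 1|, 1 / |u l 0 + u l 1|]| ≤ 1 := by
    rw [vec2_dotProduct]
    simp only [cons_val_zero, cons_val_one]
    rw [← add_mul, mul_one_div, abs_div, abs_abs]
    exact div_le_one_of_le₀ (hmax k) (abs_nonneg _)
  refine ⟨l, by positivity, ?_⟩
  simpa only [hst, mul_one_div] using
    ofReal_le_volume_openPolar hs ht (by positivity) h0 h1 hp hq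

end PlanarPolar

lemma two_mul_sqrt_two_lt_add_two_div {σ : ℝ} (hσ : 0 < σ) (hne : σ ≠ √2) :
    2 * √2 < σ + 2 / σ := by
  have hsq : 0 < (σ - √2) ^ 2 / σ := by
    have := sub_ne_zero.2 hne
    positivity
  have hexpand : (σ - √2) ^ 2 / σ = σ + 2 / σ - 2 * √2 := by
    have : √2 ^ 2 = 2 := Real.sq_sqrt zero_le_two
    field_simp
    linear_combination this
  linarith

section TripleProduct

variable {R : Type*} [CommRing R]

lemma triple_product_smul_eq (α v w c : Fin 3 → R) :
    (α ⬝ᵥ v ⨯₃ w) • c =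
      (α ⬝ᵥ c ⨯₃ w) • v + (α ⬝ᵥ v ⨯₃ c) • w + (c ⬝ᵥ v ⨯₃ w) • α := by
  ext t
  fin_cases t <;> simp [cross_apply, vec3_dotProduct, -dotProduct_cons] <;> ring

lemma triple_product_mul_sub_mul (α v w c d : Fin 3 → R) :
    (α ⬝ᵥ c ⨯₃ w) * (α ⬝ᵥ v ⨯₃ d) - (α ⬝ᵥ v ⨯₃ c) * (α ⬝ᵥ d ⨯₃ w) =
      (α ⬝ᵥ v ⨯₃ w) * (α ⬝ᵥ c ⨯₃ d) := by
  simp only [cross_apply, vec3_dotProduct, cons_val_zero, cons_val_one, cons_val]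
  ring

lemma intCast_triple_product (u v w : Fin 3 → ℤ) :
    ((u ⬝ᵥ v ⨯₃ w : ℤ) : R) = (Int.cast ∘ u) ⬝ᵥ (Int.cast ∘ v) ⨯₃ (Int.cast ∘ w) := by
  simp only [cross_apply, vec3_dotProduct, cons_val_zero, cons_val_one, cons_val, Int.cast_add,
    Int.cast_sub, Int.cast_mul, Function.comp_apply]

lemma exists_triple_product_ne_zero {ι : Type*} {A : Matrix ι (Fin 3) R} {α : Fin 3 → R}
    (hA : ∀ z, A *ᵥ z = 0 → z = 0) (hα : α ≠ 0) : ∃ k l, α ⬝ᵥ A k ⨯₃ A l ≠ 0 := by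
  by_contra! hzero
  have hparallel k : α ⨯₃ A k = 0 := hA _ <| funext fun l => by
    change A l ⬝ᵥ α ⨯₃ A k = 0
    rw [triple_product_permutation, hzero]
  have hcross v : α ⨯₃ v = 0 := hA _ <| funext fun l => by
    change A l ⬝ᵥ α ⨯₃ v = 0
    rw [← neg_eq_zero, ← dotProduct_neg, cross_anticomm, triple_product_permutation, hparallel,
      dotProduct_zero]
  refine hα (funext fun t => ?_)
  have h0 := hcross ![1, 0, 0]
  have h1 := hcross ![0, 1, 0]
  fin_cases t <;> simp_all [cross_apply]

end TripleProduct

section PlanarCoord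

variable {α v w c d : Fin 3 → ℝ}

/-- The coordinates of `c` modulo `α` in the basis formed by `v` and `w`, by Cramer's rule. -/
noncomputable def planarCoord (α v w c : Fin 3 → ℝ) : Fin 2 → ℝ :=
  ![(α ⬝ᵥ c ⨯₃ w) / (α ⬝ᵥ v ⨯₃ w), (α ⬝ᵥ v ⨯₃ c) / (α ⬝ᵥ v ⨯₃ w)]

lemma planarCoord_left (hvw : α ⬝ᵥ v ⨯₃ w ≠ 0) : planarCoord α v w v = ![1, 0] := by
  simp only [planarCoord, div_self hvw, cross_self, dotProduct_zero, zero_div]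

lemma planarCoord_right (hvw : α ⬝ᵥ v ⨯₃ w ≠ 0) : planarCoord α v w w = ![0, 1] := by
  simp only [planarCoord, div_self hvw, cross_self, dotProduct_zero, zero_div]

lemma planarDet_planarCoord (hvw : α ⬝ᵥ v ⨯₃ w ≠ 0) :
    planarDet (planarCoord α v w c) (planarCoord α v w d) =
      (α ⬝ᵥ c ⨯₃ d) / (α ⬝ᵥ v ⨯₃ w) := by
  simp only [planarDet, planarCoord, cons_val_zero, cons_val_one]
  field_simp
  exact triple_product_mul_sub_mul α v w c d

lemma eq_planarCoord_smul_add (hvw : α ⬝ᵥ v ⨯₃ w ≠ 0) (c : Fin 3 → ℝ) :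
    c = planarCoord α v w c 0 • v + planarCoord α v w c 1 • w +
      ((c ⬝ᵥ v ⨯₃ w) / (α ⬝ᵥ v ⨯₃ w)) • α := by
  refine smul_right_injective _ hvw ?_
  simp only [smul_add, smul_smul, planarCoord, cons_val_zero, cons_val_one, mul_div_cancel₀ _ hvw]
  exact triple_product_smul_eq α v w c

lemma abs_planarCoord_add_ne_sqrt_two (α v w c : Fin 3 → ℤ) :
    |planarCoord (Int.cast ∘ α) (Int.cast ∘ v) (Int.cast ∘ w) (Int.cast ∘ c) 0 +
      planarCoord (Int.cast ∘ α) (Int.cast ∘ v) (Int.cast ∘ w) (Int.cast ∘ c) 1| ≠ √2 := by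
  intro h
  refine irrational_sqrt_two ⟨|(α ⬝ᵥ c ⨯₃ w : ℤ) / (α ⬝ᵥ v ⨯₃ w : ℤ) +
    (α ⬝ᵥ v ⨯₃ c : ℤ) / (α ⬝ᵥ v ⨯₃ w : ℤ)|, ?_⟩
  rw [← h]
  push_cast
  simp only [planarCoord, intCast_triple_product, cons_val_zero, cons_val_one]

end PlanarCoord

section CylinderFunctional

variable {ι n : Type*} [Fintype n] {α x : n → ℝ} {a : ι → n → ℝ}

/-- The projection of the functional `c` along `α` onto the functionals vanishing at `x`. -/
noncomputable def transversePart (α x c : n → ℝ) : n → ℝ :=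
  c - (c ⬝ᵥ x / α ⬝ᵥ x) • α

/-- The functionals cutting out the cylinder with axis `ℝ x`, height `-1 < ⟨α, z⟩ / ⟨α, x⟩ < 1`
and base `|⟨a k, z⟩| < 1` in the hyperplane `α^⊥`. -/
noncomputable def cylinderFunctional (α x : n → ℝ) (a : ι → n → ℝ) (o : Option ι) : n → ℝ :=
  o.elim ((α ⬝ᵥ x)⁻¹ • α) fun k => transversePart α x (a k)

lemma dotProduct_lt_add_one_of_mem_openPolar_cylinderFunctional {z : n → ℝ} {β : ℝ} {k : ι}
    (hz : z ∈ openPolar (cylinderFunctional α x a)) (hheight : 0 ≤ (α ⬝ᵥ x)⁻¹ • α ⬝ᵥ z)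
    (hβ : 0 ≤ β) (hx : a k ⬝ᵥ x ≤ β) : a k ⬝ᵥ z < β + 1 := by
  have haxial : (α ⬝ᵥ x)⁻¹ • α ⬝ᵥ z < 1 := (abs_lt.1 (hz none)).2
  have htransverse : transversePart α x (a k) ⬝ᵥ z < 1 := (abs_lt.1 (hz (some k))).2
  calc a k ⬝ᵥ z
      = ((α ⬝ᵥ x)⁻¹ • α ⬝ᵥ z) * (a k ⬝ᵥ x) + transversePart α x (a k) ⬝ᵥ z := by
        simp only [transversePart, sub_dotProduct, smul_dotProduct, smul_eq_mul]
        ring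
    _ < ((α ⬝ᵥ x)⁻¹ • α ⬝ᵥ z) * β + 1 :=
        add_lt_add_of_le_of_lt (mul_le_mul_of_nonneg_left hx hheight) htransverse
    _ ≤ β + 1 := add_le_add_left (mul_le_of_le_one_left hβ haxial.le) 1

end CylinderFunctional

section ProximityCylinder

variable {ι : Type*} {α x v w c : Fin 3 → ℝ} {a : ι → Fin 3 → ℝ} {i j : ι}

lemma transversePart_eq_planarCoord_smul_add (hαx : α ⬝ᵥ x ≠ 0) (hvw : α ⬝ᵥ v ⨯₃ w ≠ 0) :
    transversePart α x c = planarCoord α v w c 0 • transversePart α x v +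
      planarCoord α v w c 1 • transversePart α x w := by
  have hc := eq_planarCoord_smul_add hvw c
  have hcx := congrArg (· ⬝ᵥ x / α ⬝ᵥ x) hc
  simp only [add_dotProduct, smul_dotProduct, smul_eq_mul, add_div, mul_div_assoc,
    div_self hαx] at hcx
  ext t
  have hct := congrFun hc t
  simp only [transversePart, Pi.add_apply, Pi.sub_apply, Pi.smul_apply, smul_eq_mul] at hct ⊢
  linear_combination hct - α t * hcx

/-- The change of coordinates that turns the cylinder of `cylinderFunctional`, with `v` and `w` two
of its rows, into a product of `(-1, 1)` with a planar polar. -/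
noncomputable def cylinderMatrix (α x v w : Fin 3 → ℝ) : Matrix (Fin 3) (Fin 3) ℝ :=
  of ![(α ⬝ᵥ x)⁻¹ • α, transversePart α x v, transversePart α x w]

lemma det_cylinderMatrix : (cylinderMatrix α x v w).det = (α ⬝ᵥ v ⨯₃ w) / α ⬝ᵥ x := by
  simp only [cylinderMatrix, transversePart, det_fin_three, cross_apply,
    vec3_dotProduct (v := α) (w := ![_, _, _]), of_apply, cons_val_zero, cons_val_one, cons_val,
    Pi.smul_apply, Pi.sub_apply, smul_eq_mul]
  ring

lemma openPolar_cylinderFunctional_eq_preimage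
    (hαx : α ⬝ᵥ x ≠ 0) (hij : α ⬝ᵥ a i ⨯₃ a j ≠ 0) :
    openPolar (cylinderFunctional α x a) = toLin' (cylinderMatrix α x (a i) (a j)) ⁻¹'
      {z | z 0 ∈ Set.Ioo (-1) 1 ∧
        Fin.tail z ∈ openPolar fun k => planarCoord α (a i) (a j) (a k)} := by
  ext z
  refine Option.forall.trans (and_congr abs_lt (forall_congr' fun k => ?_))
  change |transversePart α x (a k) ⬝ᵥ z| < 1 ↔ _
  rw [transversePart_eq_planarCoord_smul_add hαx hij, add_dotProduct, smul_dotProduct,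
    smul_dotProduct, vec2_dotProduct]
  rfl

lemma volume_openPolar_cylinderFunctional (hαx : α ⬝ᵥ x ≠ 0) (hij : α ⬝ᵥ a i ⨯₃ a j ≠ 0) :
    volume (openPolar (cylinderFunctional α x a)) =
      ENNReal.ofReal |α ⬝ᵥ x / α ⬝ᵥ a i ⨯₃ a j| *
        (2 * volume (openPolar fun k => planarCoord α (a i) (a j) (a k))) := by
  have hdet : LinearMap.det (toLin' (cylinderMatrix α x (a i) (a j))) =
      (α ⬝ᵥ a i ⨯₃ a j) / α ⬝ᵥ x := by
    rw [LinearMap.det_toLin', det_cylinderMatrix]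
  rw [openPolar_cylinderFunctional_eq_preimage hαx hij,
    Measure.addHaar_preimage_linearMap _ (by rw [hdet]; exact div_ne_zero hij hαx), hdet, inv_div,
    volume_cylinder, Real.volume_Ioo]
  norm_num

lemma eight_lt_volume_openPolar_cylinderFunctional [Finite ι]
    (hmax : ∀ k l, |α ⬝ᵥ a k ⨯₃ a l| ≤ |α ⬝ᵥ a i ⨯₃ a j|) (hij : α ⬝ᵥ a i ⨯₃ a j ≠ 0)
    (hne : ∀ l, |planarCoord α (a i) (a j) (a l) 0 + planarCoord α (a i) (a j) (a l) 1| ≠ √2)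
    (hx : √2 * |α ⬝ᵥ a i ⨯₃ a j| ≤ |α ⬝ᵥ x|) :
    8 < volume (openPolar (cylinderFunctional α x a)) := by
  have hij_pos : 0 < |α ⬝ᵥ a i ⨯₃ a j| := abs_pos.2 hij
  have hαx : α ⬝ᵥ x ≠ 0 := abs_pos.1 ((by positivity : 0 < √2 * |α ⬝ᵥ a i ⨯₃ a j|).trans_le hx)
  obtain ⟨l, hσ, hvol⟩ := exists_ofReal_add_two_div_le_volume_openPolar
    (u := fun k => planarCoord α (a i) (a j) (a k)) (planarCoord_left hij) (planarCoord_right hij)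
    fun k l => by
      rw [planarDet_planarCoord hij, abs_div]
      exact div_le_one_of_le₀ (hmax k l) (abs_nonneg _)
  have hbase : ENNReal.ofReal (2 * √2) <
      volume (openPolar fun k => planarCoord α (a i) (a j) (a k)) :=
    ((ENNReal.ofReal_lt_ofReal_iff (by positivity)).2
      (two_mul_sqrt_two_lt_add_two_div hσ (hne l))).trans_le hvol
  rw [volume_openPolar_cylinderFunctional hαx hij]
  calc (8 : ENNReal) = ENNReal.ofReal √2 * (2 * ENNReal.ofReal (2 * √2)) := by
        rw [← ENNReal.ofReal_ofNat 2, ← ENNReal.ofReal_mul zero_le_two,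
          ← ENNReal.ofReal_mul (Real.sqrt_nonneg 2), ← ENNReal.ofReal_ofNat 8]
        congr 1
        linear_combination -4 * Real.mul_self_sqrt (zero_le_two (α := ℝ))
    _ < ENNReal.ofReal √2 * (2 * volume (openPolar fun k => planarCoord α (a i) (a j) (a k))) := by
        have hsqrt : ENNReal.ofReal √2 ≠ 0 := by simp
        exact ENNReal.mul_lt_mul_right hsqrt ENNReal.ofReal_ne_top
          (ENNReal.mul_lt_mul_right two_ne_zero ENNReal.ofNat_ne_top hbase)
    _ ≤ _ := by
        gcongr
        rw [abs_div, le_div_iff₀ hij_pos]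
        exact hx

end ProximityCylinder

section Polyhedron

/-- The polyhedron `P(A, b) = {x : A x ≤ b}`. -/
def polyhedron {ι n : Type*} [Fintype n] (A : Matrix ι n ℤ) (b : ι → ℤ) : Set (n → ℝ) :=
  {x | ∀ i, (A.map (Int.cast : ℤ → ℝ) *ᵥ x) i ≤ b i}

lemma intCast_mem_polyhedron_iff {ι n : Type*} [Fintype n] {A : Matrix ι n ℤ} {b : ι → ℤ}
    {z : n → ℤ} : Int.cast ∘ z ∈ polyhedron A b ↔ ∀ k, (A *ᵥ z) k ≤ b k := by
  refine forall_congr' fun k => ?_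
  rw [← Int.cast_le (R := ℝ)]
  exact iff_of_eq (congrArg (· ≤ (b k : ℝ))
    (RingHom.map_mulVec (Int.castRingHom ℝ) A z k).symm)

/-- The quantity `Δ(A, α)`, the maximum of `|det(α, aᵢ, aⱼ)|` over pairs of rows of `A`
(`0` if `A` has no rows). -/
def maxAbsDet {ι : Type*} [Fintype ι] (A : Matrix ι (Fin 3) ℤ) (α : Fin 3 → ℤ) : ℕ :=
  Finset.univ.sup fun p : ι × ι =>
    (det !![α 0, A p.1 0, A p.2 0; α 1, A p.1 1, A p.2 1; α 2, A p.1 2, A p.2 2]).natAbs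

variable {ι : Type*} [Fintype ι] {A : Matrix ι (Fin 3) ℤ} {α : Fin 3 → ℤ}

lemma maxAbsDet_eq_sup_triple_product (A : Matrix ι (Fin 3) ℤ) (α : Fin 3 → ℤ) :
    maxAbsDet A α = Finset.univ.sup fun p : ι × ι => (α ⬝ᵥ A p.1 ⨯₃ A p.2).natAbs := by
  unfold maxAbsDet
  congr! 3 with p
  rw [triple_product_eq_det, ← det_transpose]
  congr 1
  ext s t
  fin_cases s <;> fin_cases t <;> rfl

lemma isGreatest_univ_sup {κ β : Type*} [Fintype κ] [Nonempty κ] [LinearOrder β] [OrderBot β]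
    (f : κ → β) :
    IsGreatest (Set.range f) (Finset.univ.sup f) := by
  obtain ⟨p, -, hp⟩ := Finset.exists_mem_eq_sup Finset.univ Finset.univ_nonempty f
  refine ⟨⟨p, hp.symm⟩, ?_⟩
  rintro _ ⟨q, rfl⟩
  exact Finset.le_sup (Finset.mem_univ q)

lemma isGreatest_maxAbsDet [Nonempty ι] (A : Matrix ι (Fin 3) ℤ) (α : Fin 3 → ℤ) :
    IsGreatest (Set.range fun p : ι × ι => (α ⬝ᵥ A p.1 ⨯₃ A p.2).natAbs) (maxAbsDet A α) := by
  rw [maxAbsDet_eq_sup_triple_product]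
  exact isGreatest_univ_sup _

lemma abs_triple_product_intCast (u v w : Fin 3 → ℤ) :
    |(Int.cast ∘ u : Fin 3 → ℝ) ⬝ᵥ (Int.cast ∘ v) ⨯₃ (Int.cast ∘ w)| =
      (u ⬝ᵥ v ⨯₃ w).natAbs := by
  rw [← intCast_triple_product, Nat.cast_natAbs, Int.cast_abs]

lemma eight_lt_volume_openPolar_cylinderFunctional_intCast {k l : ι}
    (hkl : α ⬝ᵥ A k ⨯₃ A l ≠ 0) {x : Fin 3 → ℝ}
    (hx : √2 * maxAbsDet A α ≤ |Int.cast ∘ α ⬝ᵥ x|) :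
    8 < volume (openPolar (cylinderFunctional (Int.cast ∘ α) x fun k => Int.cast ∘ A k)) := by
  have : Nonempty ι := ⟨k⟩
  obtain ⟨⟨⟨i, j⟩, hij : (α ⬝ᵥ A i ⨯₃ A j).natAbs = _⟩, hmax⟩ := isGreatest_maxAbsDet A α
  have hle (k l : ι) : (α ⬝ᵥ A k ⨯₃ A l).natAbs ≤ (α ⬝ᵥ A i ⨯₃ A j).natAbs :=
    (hmax ⟨(k, l), rfl⟩).trans_eq hij.symm
  have hpos : 0 < (α ⬝ᵥ A i ⨯₃ A j).natAbs := (Int.natAbs_pos.2 hkl).trans_le (hle k l)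
  refine eight_lt_volume_openPolar_cylinderFunctional (i := i) (j := j) (fun k l => ?_) ?_
    (fun l => abs_planarCoord_add_ne_sqrt_two α (A i) (A j) (A l)) ?_
  · simpa only [abs_triple_product_intCast, Nat.cast_le] using hle k l
  · rw [← abs_pos, abs_triple_product_intCast]
    exact Nat.cast_pos.2 hpos
  · rwa [abs_triple_product_intCast, hij]

end Polyhedron

theorem stmt7_general {ι : Type*} [Fintype ι] {A : Matrix ι (Fin 3) ℤ} {b : ι → ℤ}
    {α : Fin 3 → ℤ} (hα : α ≠ 0) (hzero : 0 ∈ polyhedron A b)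
    (hint : ∀ x ∈ polyhedron A b, (∀ i, ∃ z : ℤ, x i = z) → x = 0)
    {x : Fin 3 → ℝ} (hx : x ∈ polyhedron A b) :
    |∑ i, (α i : ℝ) * x i| < √2 * maxAbsDet A α := by
  have hb k : 0 ≤ b k := by simpa [polyhedron] using hzero k
  have hint_int z (hz : ∀ k, (A *ᵥ z) k ≤ b k) : z = 0 := by
    have hcast := hint _ (intCast_mem_polyhedron_iff.2 hz) fun i => ⟨z i, rfl⟩
    exact funext fun i => Int.cast_eq_zero.1 (congrFun hcast i)
  obtain ⟨k, l, hkl⟩ := exists_triple_product_ne_zero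
    (fun z hz => hint_int z fun k => by rw [hz]; exact hb k) hα
  by_contra! hlarge
  have hvol := eight_lt_volume_openPolar_cylinderFunctional_intCast hkl hlarge
  have hpow : (2 : ENNReal) ^ Fintype.card (Fin 3) = 8 := by norm_num
  obtain ⟨z, hz0, hheight, hz⟩ := exists_int_ne_zero_dotProduct_nonneg_mem
    ((Int.cast ∘ α ⬝ᵥ x)⁻¹ • (Int.cast ∘ α)) (fun _ => neg_mem_openPolar) convex_openPolar
    (hpow.trans_lt hvol)
  refine hz0 (hint_int z fun k => Int.lt_add_one_iff.1 ?_)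
  have hlt := dotProduct_lt_add_one_of_mem_openPolar_cylinderFunctional hz hheight
    (Int.cast_nonneg (hb k)) (hx k)
  rw [← Int.cast_lt (R := ℝ), Int.cast_add, Int.cast_one]
  exact (RingHom.map_mulVec (Int.castRingHom ℝ) A z k).trans_lt hlt

/-- Three-dimensional proximity bound (`κ₃ < √2`). -/
theorem stmt7 {m : ℕ} (A : Matrix (Fin m) (Fin 3) ℤ) (b : Fin m → ℤ)
    (α : Fin 3 → ℤ) (hα : α ≠ 0)
    (P : Set (Fin 3 → ℝ))
    (hP : P = {x | ∀ i, (A.map (Int.cast : ℤ → ℝ)).mulVec x i ≤ (b i : ℝ)})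
    (hzero : (0 : Fin 3 → ℝ) ∈ P)
    (hint : ∀ x ∈ P, (∀ i, ∃ z : ℤ, x i = (z : ℝ)) → x = 0)
    (hfulldim : (interior P).Nonempty)
    (Δ : ℕ)
    (hΔ : Δ = Finset.univ.sup fun p : Fin m × Fin m =>
      (Matrix.det !![α 0, A p.1 0, A p.2 0; α 1, A p.1 1, A p.2 1;
                     α 2, A p.1 2, A p.2 2]).natAbs) :
    ∀ x ∈ P, ∑ i, (α i : ℝ) * x i < Real.sqrt 2 * (Δ : ℝ) := by
  subst hP hΔ
  exact fun x hx => (le_abs_self _).trans_lt (stmt7_general hα hzero hint hx)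
end

section
/- Let A ∈ ℤ^{m×n}, b ∈ ℚ^m, c ∈ ℚⁿ, with A of full column rank. Let x* be an optimal vertex of max{cᵀx : Ax ≤ b}. If the integer program max{cᵀx : Ax ≤ b, x ∈ ℤⁿ} is feasible, then it has an optimal solution z* with ‖x* − z*‖_∞ ≤ n · max{Δ_k(A) : k = 1,…,n}. -/
/-!
Let `x` be an optimal solution of the linear program and `w` a feasible integer point. The vector
`w - x` is a nonnegative combination of at most `n` integer vectors `g` with entries bounded by the
subdeterminants of `A`, such that both `g` and `A g` agree in sign with `w - x` and `A (w - x)`.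
Rounding the coefficients down splits `w - x = y + r` with `y` integral and `‖r‖ ≤ n Δ`. By sign
agreement, both `x + y` and `x + r = w - y` lie in the polyhedron. Optimality of `x` against `x + y`
gives `c y ≤ 0`, so the integer point `w - y` is at least as good as `w`, and it is within `n Δ`
of `x`. Only finitely many integer points are that close to `x`, and the best of them is optimal.

The bounded integer vectors come from Laplace expansion: the cofactors along a new row of a
`(k + 1) × (k + 1)` submatrix are annihilated by every row of `A` for which the bordered minor
vanishes.
-/

open Matrix

/-- `maxMinor A k` is the largest absolute value of a `k × k` minor of `A`. -/
def maxMinor {m n : ℕ} (A : Matrix (Fin m) (Fin n) ℤ) (k : ℕ) : ℕ :=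
  Finset.sup (Finset.univ.filter fun p : (Fin k → Fin m) × (Fin k → Fin n) =>
      Function.Injective p.1 ∧ Function.Injective p.2)
    fun p => ((A.submatrix p.1 p.2).det).natAbs

section Conformal

variable {ι K : Type*}

/-- `u` conforms to `v` if the signs of the coordinates of `u` agree with those of `v`, where a
vanishing coordinate of `v` forces the same coordinate of `u` to vanish. This is the sign
compatibility required of the terms of a conformal decomposition. -/
def ConformsTo [Zero K] [LE K] (u v : ι → K) : Prop :=
  ∀ i, (0 ≤ v i → 0 ≤ u i) ∧ (v i ≤ 0 → u i ≤ 0)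

namespace ConformsTo

lemma trans [Zero K] [LE K] {u v w : ι → K} (huv : ConformsTo u v) (hvw : ConformsTo v w) :
    ConformsTo u w :=
  fun i => ⟨fun h => (huv i).1 ((hvw i).1 h), fun h => (huv i).2 ((hvw i).2 h)⟩

lemma eq_zero [Zero K] [PartialOrder K] {u v : ι → K} (h : ConformsTo u v) {i : ι}
    (hi : v i = 0) : u i = 0 :=
  le_antisymm ((h i).2 hi.le) ((h i).1 hi.ge)

lemma exists_mul_pos [Ring K] [LinearOrder K] [IsStrictOrderedRing K] {u v : ι → K}
    (h : ConformsTo u v) (hu : u ≠ 0) : ∃ i, 0 < u i * v i := by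
  obtain ⟨i, hi⟩ := Function.ne_iff.1 hu
  rcases lt_or_gt_of_ne (mt h.eq_zero hi) with hv | hv
  · exact ⟨i, mul_pos_of_neg_of_neg (lt_of_le_of_ne ((h i).2 hv.le) hi) hv⟩
  · exact ⟨i, mul_pos (lt_of_le_of_ne' ((h i).1 hv.le) hi) hv⟩

lemma sum [AddCommMonoid K] [PartialOrder K] [IsOrderedAddMonoid K] {κ : Type*} {s : Finset κ}
    {u : κ → ι → K} {v : ι → K} (h : ∀ a ∈ s, ConformsTo (u a) v) :
    ConformsTo (∑ a ∈ s, u a) v := by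
  intro i
  rw [Finset.sum_apply]
  exact ⟨fun hv => Finset.sum_nonneg fun a ha => (h a ha i).1 hv,
    fun hv => Finset.sum_nonpos fun a ha => (h a ha i).2 hv⟩

lemma smul [Ring K] [PartialOrder K] [IsOrderedRing K] {u v : ι → K} {t : K}
    (ht : 0 ≤ t) (h : ConformsTo u v) : ConformsTo (t • u) v :=
  fun i => ⟨fun hv => mul_nonneg ht ((h i).1 hv),
    fun hv => mul_nonpos_of_nonneg_of_nonpos ht ((h i).2 hv)⟩

lemma add_le [AddCommGroup K] [LinearOrder K] [IsOrderedAddMonoid K] {u v w y : ι → K}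
    (hu : u ≤ w) (hv : v ≤ w) (hy : ConformsTo y (v - u)) (hr : ConformsTo (v - u - y) (v - u)) :
    u + y ≤ w := by
  intro i
  rcases le_total (v i) (u i) with h | h
  · have hyi : y i ≤ 0 := (hy i).2 (sub_nonpos.2 h)
    exact (add_le_of_nonpos_right hyi).trans (hu i)
  · have hri : 0 ≤ v i - u i - y i := (hr i).1 (sub_nonneg.2 h)
    rw [sub_sub, sub_nonneg] at hri
    exact hri.trans (hv i)

end ConformsTo

variable [Field K] [LinearOrder K] [IsStrictOrderedRing K] [Finite ι]

lemma exists_conformsTo_sub_smul {g v : ι → K} (hsupp : ∀ i, v i = 0 → g i = 0)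
    (hpos : ∃ i, 0 < g i * v i) :
    ∃ t : K, 0 < t ∧ ConformsTo (v - t • g) v ∧ ∃ i, v i ≠ 0 ∧ (v - t • g) i = 0 := by
  obtain ⟨i₀, hi₀, hmin⟩ :=
    Set.exists_min_image {i | 0 < g i * v i} (fun i => v i / g i) (Set.toFinite _) hpos
  have hg₀ : g i₀ ≠ 0 := left_ne_zero_of_mul hi₀.ne'
  have ht : 0 < v i₀ / g i₀ := by
    rw [← mul_div_mul_left _ _ hg₀]
    exact div_pos hi₀ (mul_self_pos.2 hg₀)
  refine ⟨v i₀ / g i₀, ht, fun i => ⟨fun hv => ?_, fun hv => ?_⟩,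
    i₀, right_ne_zero_of_mul hi₀.ne', by simp [hg₀]⟩
  · rcases hv.eq_or_lt with hv | hv
    · simp [← hv, hsupp i hv.symm]
    · rcases lt_or_ge 0 (g i) with hg | hg
      · have := (le_div_iff₀ hg).1 (hmin i (mul_pos hg hv))
        simpa using this
      · have := mul_nonpos_of_nonneg_of_nonpos ht.le hg
        simpa using this.trans hv.le
  · rcases hv.eq_or_lt with hv | hv
    · simp [hv, hsupp i hv]
    · rcases lt_or_ge (g i) 0 with hg | hg
      · have := (le_div_iff_of_neg hg).1 (hmin i (mul_pos_of_neg_of_neg hg hv))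
        simpa using this
      · have := mul_nonneg ht.le hg
        simpa using hv.le.trans this

variable {V : Submodule K (ι → K)} {G : Set (ι → K)}

lemma exists_mem_conformsTo (hneg : ∀ g ∈ G, -g ∈ G)
    (hG : ∀ v ∈ V, v ≠ 0 → ∃ g ∈ G, g ∈ V ∧ g ≠ 0 ∧ ∀ i, v i = 0 → g i = 0) {v : ι → K}
    (hvV : v ∈ V) (hv : v ≠ 0) : ∃ g ∈ G, g ∈ V ∧ g ≠ 0 ∧ ConformsTo g v := by
  induction hs : Function.support v using WellFoundedLT.induction generalizing v with
  | ind s ih =>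
  obtain ⟨g, hgG, hgV, hgsupp, hpos⟩ :
      ∃ g ∈ G, g ∈ V ∧ (∀ i, v i = 0 → g i = 0) ∧ ∃ i, 0 < g i * v i := by
    obtain ⟨g, hgG, hgV, hg, hgsupp⟩ := hG v hvV hv
    obtain ⟨i, hi⟩ := Function.ne_iff.1 hg
    rcases lt_or_gt_of_ne (mul_ne_zero hi (mt (hgsupp i) hi)) with h | h
    · exact ⟨-g, hneg g hgG, V.neg_mem hgV, by simpa using hgsupp, i, by simpa using h⟩
    · exact ⟨g, hgG, hgV, hgsupp, i, h⟩
  obtain ⟨t, ht, hconf, i, hvi, hi⟩ := exists_conformsTo_sub_smul hgsupp hpos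
  by_cases hzero : v - t • g = 0
  · have hgv : g = t⁻¹ • v := by rw [sub_eq_zero.1 hzero, inv_smul_smul₀ ht.ne']
    refine ⟨g, hgG, hgV, ?_, ?_⟩
    · rw [hgv]
      exact smul_ne_zero (inv_ne_zero ht.ne') hv
    · rw [hgv]
      exact ConformsTo.smul (inv_nonneg.2 ht.le) fun _ => ⟨id, id⟩
  · have hlt : Function.support (v - t • g) < s := by
      rw [← hs]
      refine (Set.ssubset_iff_of_subset (Function.support_subset_iff'.2 fun j hj => ?_)).2
        ⟨i, hvi, fun h => h hi⟩
      have hvj : v j = 0 := Function.notMem_support.1 hj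
      simp [hvj, hgsupp j hvj]
    obtain ⟨h, hhG, hhV, hh, hhconf⟩ := ih _ hlt (V.sub_mem hvV (V.smul_mem t hgV)) hzero rfl
    exact ⟨h, hhG, hhV, hh, hhconf.trans hconf⟩

theorem exists_conformal_decomposition (hneg : ∀ g ∈ G, -g ∈ G)
    (hG : ∀ v ∈ V, v ≠ 0 → ∃ g ∈ G, g ∈ V ∧ g ≠ 0 ∧ ∀ i, v i = 0 → g i = 0) {v : ι → K}
    (hvV : v ∈ V) :
    ∃ k ≤ Module.finrank K V, ∃ (l : Fin k → K) (g : Fin k → ι → K),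
      (∀ a, 0 ≤ l a) ∧ (∀ a, g a ∈ G) ∧ (∀ a, ConformsTo (g a) v) ∧ v = ∑ a, l a • g a := by
  induction hd : Module.finrank K V using Nat.strong_induction_on generalizing V v with
  | _ d ih =>
  by_cases hv : v = 0
  · exact ⟨0, d.zero_le, Fin.elim0, Fin.elim0, Fin.rec0, Fin.rec0, Fin.rec0, by simp [hv]⟩
  obtain ⟨g, hgG, hgV, hg, hgv⟩ := exists_mem_conformsTo hneg hG hvV hv
  obtain ⟨t, ht, hconf, i, hvi, hi⟩ :=
    exists_conformsTo_sub_smul (fun _ => hgv.eq_zero) (hgv.exists_mul_pos hg)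
  let W : Submodule K (ι → K) := V ⊓ LinearMap.ker (LinearMap.proj i)
  have hWV : Module.finrank K W < d := by
    rw [← hd]
    refine Submodule.finrank_lt_finrank_of_lt (lt_of_le_not_ge inf_le_left fun h => hvi ?_)
    exact (h hvV).2
  have hGW : ∀ w ∈ W, w ≠ 0 → ∃ g ∈ G, g ∈ W ∧ g ≠ 0 ∧ ∀ i, w i = 0 → g i = 0 := by
    intro w hw hw0
    obtain ⟨g, hgG, hgV, hg, hgw⟩ := hG w hw.1 hw0
    exact ⟨g, hgG, ⟨hgV, hgw i hw.2⟩, hg, hgw⟩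
  obtain ⟨k, hk, l, f, hl, hfG, hfconf, hsum⟩ :=
    ih _ hWV hGW ⟨V.sub_mem hvV (V.smul_mem t hgV), hi⟩ rfl
  refine ⟨k + 1, by lia, Fin.cons t l, Fin.cons g f, Fin.cases ht.le hl, Fin.cases hgG hfG,
    Fin.cases hgv fun a => (hfconf a).trans hconf, ?_⟩
  rw [Fin.sum_univ_succ]
  simp only [Fin.cons_zero, Fin.cons_succ, ← hsum, add_sub_cancel]

end Conformal

section Cofactor

variable {m n R : Type*} [CommRing R] {k : ℕ}

lemma injective_columns_of_det_submatrix_ne_zero {A : Matrix m n R} {p : Fin k → m}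
    {q : Fin k → n} (hdet : (A.submatrix p q).det ≠ 0) : Function.Injective q := by
  intro a b hab
  by_contra hne
  exact hdet (det_zero_of_column_eq hne fun i => by simp only [submatrix_apply, hab])

lemma injective_rows_of_det_submatrix_ne_zero {A : Matrix m n R} {p : Fin k → m}
    {q : Fin k → n} (hdet : (A.submatrix p q).det ≠ 0) : Function.Injective p := by
  rw [← det_transpose, transpose_submatrix] at hdet
  exact injective_columns_of_det_submatrix_ne_zero hdet

/-- The vector supported on the columns `q` of `A` whose entry at `q a` is the signed minor with
rows `p` and all columns of `q` except `q a`. Pairing it with a row of `A` is the Laplace expansion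
of the minor of `A` with columns `q` in which that row is put on top of the rows `p`. -/
noncomputable def cofactorVec (A : Matrix m n R) (p : Fin k → m) (q : Fin (k + 1) → n) : n → R :=
  Function.extend q (fun a => (-1) ^ (a : ℕ) * (A.submatrix p (q ∘ a.succAbove)).det) 0

lemma cofactorVec_apply (A : Matrix m n R) (p : Fin k → m) {q : Fin (k + 1) → n}
    (hq : Function.Injective q) (a : Fin (k + 1)) :
    cofactorVec A p q (q a) = (-1) ^ (a : ℕ) * (A.submatrix p (q ∘ a.succAbove)).det :=
  hq.extend_apply _ _ a

lemma cofactorVec_eq_zero (A : Matrix m n R) (p : Fin k → m) {q : Fin (k + 1) → n} {j : n}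
    (hj : j ∉ Set.range q) : cofactorVec A p q j = 0 :=
  Function.extend_apply' _ _ _ hj

lemma mulVec_cofactorVec [Fintype n] (A : Matrix m n R) (p : Fin k → m) {q : Fin (k + 1) → n}
    (hq : Function.Injective q) (i : m) :
    (A *ᵥ cofactorVec A p q) i = (A.submatrix (Fin.cons i p) q).det := by
  rw [det_succ_row_zero]
  refine (Fintype.sum_of_injective q hq _ _ (fun j hj => ?_) fun a => ?_).symm
  · rw [cofactorVec_eq_zero A p hj, mul_zero]
  · rw [cofactorVec_apply A p hq, submatrix_apply, Fin.cons_zero, submatrix_submatrix]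
    simp only [Function.comp_def, Fin.cons_succ]
    ring

/-- Every subdeterminant of `A` is at most `Δ` in absolute value. The choices `p` of rows and `q` of
columns need not be injective, which only adds vanishing determinants. -/
def SubdetsBoundedBy [LinearOrder R] (A : Matrix m n R) (Δ : R) : Prop :=
  ∀ (k : ℕ) (p : Fin k → m) (q : Fin k → n), |(A.submatrix p q).det| ≤ Δ

lemma abs_cofactorVec_le [LinearOrder R] [IsStrictOrderedRing R] {A : Matrix m n R} {Δ : R}
    (hΔ : SubdetsBoundedBy A Δ) (p : Fin k → m) {q : Fin (k + 1) → n} (hq : Function.Injective q)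
    (j : n) :
    |cofactorVec A p q j| ≤ Δ := by
  by_cases hj : j ∈ Set.range q
  · obtain ⟨a, rfl⟩ := hj
    rw [cofactorVec_apply A p hq, abs_mul, abs_neg_one_pow, one_mul]
    exact hΔ k p _
  · rw [cofactorVec_eq_zero A p hj, abs_zero]
    exact (abs_nonneg _).trans (hΔ k p (q ∘ Fin.succ))

end Cofactor

section IntegerMatrix

variable {m n K : Type*} [Fintype n] {A : Matrix m n ℤ} {Δ : ℤ}

lemma map_intCast_mulVec [NonAssocRing K] (A : Matrix m n ℤ) (h : n → ℤ) :
    A.map (Int.cast : ℤ → K) *ᵥ (fun j => (h j : K)) = fun i => ((A *ᵥ h) i : K) :=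
  funext fun i => (RingHom.map_mulVec (Int.castRingHom K) A h i).symm

lemma exists_notMem_range_of_det_submatrix_ne_zero [CommRing K] [IsDomain K] [CharZero K]
    {k : ℕ} {p : Fin k → m} {q : Fin k → n} (hdet : (A.submatrix p q).det ≠ 0) {x : n → K}
    (hx : x ≠ 0) (hp : ∀ a, (A.map (Int.cast : ℤ → K) *ᵥ x) (p a) = 0) :
    ∃ j ∉ Set.range q, x j ≠ 0 := by
  by_contra! hsupp
  have hq := injective_columns_of_det_submatrix_ne_zero hdet
  have hdetK : ((A.map (Int.cast : ℤ → K)).submatrix p q).det ≠ 0 := by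
    rw [submatrix_map, ← Int.cast_det]
    exact Int.cast_ne_zero.2 hdet
  have hxq : x ∘ q = 0 := by
    refine eq_zero_of_mulVec_eq_zero hdetK (funext fun a => ?_)
    rw [Pi.zero_apply, ← hp a]
    exact Fintype.sum_of_injective q hq _ _ (fun j hj => by rw [hsupp j hj, mul_zero])
      fun _ => rfl
  refine hx (funext fun j => ?_)
  by_cases hj : j ∈ Set.range q
  · obtain ⟨a, rfl⟩ := hj
    exact congrFun hxq a
  · exact hsupp j hj

lemma exists_bounded_int_support_subset [CommRing K] [IsDomain K] [CharZero K]
    (hΔ : SubdetsBoundedBy A Δ) {x : n → K} (hx : x ≠ 0) :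
    ∃ h : n → ℤ, h ≠ 0 ∧ (∀ j, |h j| ≤ Δ) ∧ (∀ j, x j = 0 → h j = 0) ∧
      ∀ i, (A.map (Int.cast : ℤ → K) *ᵥ x) i = 0 → (A *ᵥ h) i = 0 := by
  let Nonsing (k : ℕ) : Prop := ∃ (p : Fin k → m) (q : Fin k → n),
    (∀ a, (A.map (Int.cast : ℤ → K) *ᵥ x) (p a) = 0) ∧ (∀ a, x (q a) ≠ 0) ∧
      (A.submatrix p q).det ≠ 0
  obtain ⟨k, ⟨p, q, hp, hq, hdet⟩, hmax⟩ : ∃ k, Nonsing k ∧ ¬ Nonsing (k + 1) := by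
    by_contra! hstep
    have hall (k : ℕ) : Nonsing k := by
      induction k with
      | zero => exact ⟨Fin.elim0, Fin.elim0, Fin.rec0, Fin.rec0, by simp⟩
      | succ k ih => exact hstep k ih
    obtain ⟨p, q, -, -, hdet⟩ := hall (Fintype.card n + 1)
    have := Fintype.card_le_of_injective q (injective_columns_of_det_submatrix_ne_zero hdet)
    simp at this
  obtain ⟨j₀, hj₀, hxj₀⟩ := exists_notMem_range_of_det_submatrix_ne_zero hdet hx hp
  have hinj : Function.Injective (Fin.cons j₀ q : Fin (k + 1) → n) :=
    Fin.cons_injective_iff.2 ⟨hj₀, injective_columns_of_det_submatrix_ne_zero hdet⟩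
  have hxcons : ∀ a, x ((Fin.cons j₀ q : Fin (k + 1) → n) a) ≠ 0 := Fin.cases hxj₀ hq
  refine ⟨cofactorVec A p (Fin.cons j₀ q), fun h => hdet ?_, abs_cofactorVec_le hΔ p hinj,
    fun j hj => cofactorVec_eq_zero A p ?_, fun i hi => ?_⟩
  · simpa [Function.comp_def] using
      (cofactorVec_apply A p hinj 0).symm.trans (congrFun h _)
  · rintro ⟨a, rfl⟩
    exact hxcons a hj
  · rw [mulVec_cofactorVec A p hinj]
    by_contra hne
    exact hmax ⟨Fin.cons i p, Fin.cons j₀ q, Fin.cases hi hp, hxcons, hne⟩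

end IntegerMatrix

section Proximity

lemma finite_setOf_int_abs_sub_le {n K : Type*} [Finite n] [Ring K] [LinearOrder K]
    [IsStrictOrderedRing K] [FloorRing K] (x : n → K) (B : K) :
    {z : n → ℤ | ∀ j, |x j - z j| ≤ B}.Finite := by
  refine (Set.Finite.pi' fun j => Set.finite_Icc ⌈x j - B⌉ ⌊x j + B⌋).subset fun z hz j => ?_
  have hj := abs_sub_le_iff.1 (hz j)
  exact ⟨Int.ceil_le.2 (sub_le_comm.1 hj.1), Int.le_floor.2 (sub_le_iff_le_add'.1 hj.2)⟩

variable {m n K : Type*} [Finite m] [Fintype n] [Field K] [LinearOrder K] [IsStrictOrderedRing K]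
  {A : Matrix m n ℤ} {Δ : ℤ}

theorem exists_conformal_int_decomposition (hΔ : SubdetsBoundedBy A Δ) (x : n → K) :
    ∃ k ≤ Fintype.card n, ∃ (l : Fin k → K) (g : Fin k → n → ℤ),
      (∀ a, 0 ≤ l a) ∧ (∀ a j, |g a j| ≤ Δ) ∧
      (∀ a, ConformsTo (A.map (Int.cast : ℤ → K) *ᵥ fun j => (g a j : K))
        (A.map (Int.cast : ℤ → K) *ᵥ x)) ∧
      x = ∑ a, l a • fun j => (g a j : K) := by
  classical
  -- Recording `x` next to `A x` makes the map injective without any assumption on the rank of `A`.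
  let M : Matrix (m ⊕ n) n K := fromRows (A.map Int.cast) 1
  have hM (y : n → K) : M *ᵥ y = Sum.elim (A.map Int.cast *ᵥ y) y := by
    rw [fromRows_mulVec, one_mulVec]
  let G : Set (m ⊕ n → K) := {y | ∃ h : n → ℤ, (∀ j, |h j| ≤ Δ) ∧ M *ᵥ (fun j => (h j : K)) = y}
  have hneg : ∀ y ∈ G, -y ∈ G := by
    rintro _ ⟨h, hh, rfl⟩
    refine ⟨-h, by simpa using hh, ?_⟩
    rw [← mulVec_neg]
    congr 1
    ext j
    simp
  have hG : ∀ v ∈ LinearMap.range M.mulVecLin, v ≠ 0 →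
      ∃ g ∈ G, g ∈ LinearMap.range M.mulVecLin ∧ g ≠ 0 ∧ ∀ i, v i = 0 → g i = 0 := by
    rintro _ ⟨y, rfl⟩ hy
    obtain ⟨h, hh0, hhΔ, hhy, hhA⟩ := exists_bounded_int_support_subset hΔ
      (x := y) fun h => hy (by rw [h, map_zero])
    refine ⟨_, ⟨h, hhΔ, rfl⟩, ⟨_, rfl⟩, fun h0 => hh0 (funext fun j => ?_), ?_⟩
    · simpa [hM] using congrFun h0 (Sum.inr j)
    · simp only [mulVecLin_apply, hM, Sum.forall, Sum.elim_inl, Sum.elim_inr, map_intCast_mulVec,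
        Int.cast_eq_zero]
      exact ⟨hhA, hhy⟩
  obtain ⟨k, hk, l, y, hl, hyG, hconf, hsum⟩ :=
    exists_conformal_decomposition hneg hG (LinearMap.mem_range_self M.mulVecLin x)
  choose g hg hgy using hyG
  refine ⟨k, ?_, l, g, hl, hg, fun a i => ?_, funext fun j => ?_⟩
  · calc k ≤ Module.finrank K (LinearMap.range M.mulVecLin) := hk
      _ ≤ Module.finrank K (n → K) := LinearMap.finrank_range_le _
      _ = Fintype.card n := Module.finrank_fintype_fun_eq_card K
  · simpa [← hgy, hM] using hconf a (Sum.inl i)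
  · simpa [← hgy, hM] using congrFun hsum (Sum.inr j)

variable [FloorRing K]

theorem exists_conformal_int_rounding (hΔ : SubdetsBoundedBy A Δ) (x : n → K) :
    ∃ y : n → ℤ,
      ConformsTo (A.map (Int.cast : ℤ → K) *ᵥ fun j => (y j : K))
        (A.map (Int.cast : ℤ → K) *ᵥ x) ∧
      ConformsTo (A.map (Int.cast : ℤ → K) *ᵥ (x - fun j => (y j : K)))
        (A.map (Int.cast : ℤ → K) *ᵥ x) ∧
      ∀ j, |x j - y j| ≤ Fintype.card n * Δ := by
  obtain ⟨k, hk, l, g, hl, hg, hconf, hx⟩ := exists_conformal_int_decomposition hΔ x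
  have hfloor : (fun j => ((∑ a, ⌊l a⌋ * g a j : ℤ) : K)) =
      ∑ a, (⌊l a⌋ : K) • fun j => (g a j : K) := by
    ext j
    simp
  have hfract : (x - fun j => ((∑ a, ⌊l a⌋ * g a j : ℤ) : K)) =
      ∑ a, Int.fract (l a) • fun j => (g a j : K) := by
    simp only [hfloor, Int.fract, sub_smul, Finset.sum_sub_distrib, ← hx]
  refine ⟨fun j => ∑ a, ⌊l a⌋ * g a j, ?_, ?_, fun j => ?_⟩
  · rw [hfloor, mulVec_sum]
    simp only [mulVec_smul]
    exact .sum fun a _ => (hconf a).smul (Int.cast_nonneg (Int.floor_nonneg.2 (hl a)))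
  · rw [hfract, mulVec_sum]
    simp only [mulVec_smul]
    exact .sum fun a _ => (hconf a).smul (Int.fract_nonneg _)
  · have hΔ0 : 0 ≤ Δ := (abs_nonneg _).trans (hΔ 0 Fin.elim0 Fin.elim0)
    have hterm (a : Fin k) : |Int.fract (l a) * (g a j : K)| ≤ Δ := by
      rw [abs_mul, abs_of_nonneg (Int.fract_nonneg _)]
      refine (mul_le_of_le_one_left (abs_nonneg _) (Int.fract_lt_one _).le).trans ?_
      exact_mod_cast hg a j
    calc |x j - ((∑ a, ⌊l a⌋ * g a j : ℤ) : K)|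
        = |∑ a, Int.fract (l a) * (g a j : K)| := by
          simpa using congrArg abs (congrFun hfract j)
      _ ≤ ∑ a, |Int.fract (l a) * (g a j : K)| := Finset.abs_sum_le_sum_abs _ _
      _ ≤ ∑ _a : Fin k, (Δ : K) := Finset.sum_le_sum fun a _ => hterm a
      _ = k * Δ := by simp
      _ ≤ Fintype.card n * Δ := by gcongr

theorem exists_int_improvement_near (hΔ : SubdetsBoundedBy A Δ) {b : m → K} {c x : n → K}
    (hx : A.map (Int.cast : ℤ → K) *ᵥ x ≤ b)
    (hopt : ∀ y, A.map (Int.cast : ℤ → K) *ᵥ y ≤ b → c ⬝ᵥ y ≤ c ⬝ᵥ x) {w : n → ℤ}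
    (hw : (A.map (Int.cast : ℤ → K) *ᵥ fun j => (w j : K)) ≤ b) :
    ∃ z : n → ℤ, (A.map (Int.cast : ℤ → K) *ᵥ fun j => (z j : K)) ≤ b ∧
      (c ⬝ᵥ fun j => (w j : K)) ≤ c ⬝ᵥ (fun j => (z j : K)) ∧
      ∀ j, |x j - z j| ≤ Fintype.card n * Δ := by
  set wK : n → K := fun j => w j with hwK
  obtain ⟨y, hy, hr, hnear⟩ := exists_conformal_int_rounding hΔ (wK - x)
  set yK : n → K := fun j => y j with hyK
  have hz : (fun j => ((w j - y j : ℤ) : K)) = wK - yK := by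
    ext j
    simp [hwK, hyK]
  simp only [mulVec_sub] at hy hr
  have hxy : A.map (Int.cast : ℤ → K) *ᵥ (x + yK) ≤ b := by
    rw [mulVec_add]
    exact hy.add_le hx hw hr
  have hxr : A.map (Int.cast : ℤ → K) *ᵥ (wK - yK) ≤ b := by
    have := hr.add_le hx hw (by rwa [sub_sub_cancel])
    rwa [← add_sub_assoc, add_sub_cancel, ← mulVec_sub] at this
  refine ⟨fun j => w j - y j, hz ▸ hxr, ?_, fun j => ?_⟩
  · have hcy : c ⬝ᵥ yK ≤ 0 := by
      have := hopt _ hxy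
      rwa [dotProduct_add, add_le_iff_nonpos_right] at this
    rw [hz, dotProduct_sub]
    exact le_sub_self_iff _ |>.2 hcy
  · rw [abs_sub_comm]
    convert hnear j using 2
    simp [hwK]
    ring

theorem exists_int_optimal_near (hΔ : SubdetsBoundedBy A Δ) {b : m → K} {c x : n → K}
    (hx : A.map (Int.cast : ℤ → K) *ᵥ x ≤ b)
    (hopt : ∀ y, A.map (Int.cast : ℤ → K) *ᵥ y ≤ b → c ⬝ᵥ y ≤ c ⬝ᵥ x)
    (hfeas : ∃ w : n → ℤ, (A.map (Int.cast : ℤ → K) *ᵥ fun j => (w j : K)) ≤ b) :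
    ∃ z : n → ℤ, (A.map (Int.cast : ℤ → K) *ᵥ fun j => (z j : K)) ≤ b ∧
      (∀ w : n → ℤ, (A.map (Int.cast : ℤ → K) *ᵥ fun j => (w j : K)) ≤ b →
        (c ⬝ᵥ fun j => (w j : K)) ≤ c ⬝ᵥ fun j => (z j : K)) ∧
      ∀ j, |x j - z j| ≤ Fintype.card n * Δ := by
  let near : Set (n → ℤ) := {z | (∀ j, |x j - z j| ≤ Fintype.card n * Δ) ∧
    (A.map (Int.cast : ℤ → K) *ᵥ fun j => (z j : K)) ≤ b}
  have hfin : near.Finite := (finite_setOf_int_abs_sub_le x _).subset fun z hz => hz.1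
  have hne : near.Nonempty := by
    obtain ⟨w, hw⟩ := hfeas
    obtain ⟨z, hzb, -, hz⟩ := exists_int_improvement_near hΔ hx hopt hw
    exact ⟨z, hz, hzb⟩
  obtain ⟨z, ⟨hz, hzb⟩, hmax⟩ :=
    Set.exists_max_image near (fun z => c ⬝ᵥ fun j => (z j : K)) hfin hne
  refine ⟨z, hzb, fun w hw => ?_, hz⟩
  obtain ⟨w', hwb, hle, hw'⟩ := exists_int_improvement_near hΔ hx hopt hw
  exact hle.trans (hmax w' ⟨hw', hwb⟩)

end Proximity

section MaxMinor

variable {m n : ℕ} {A : Matrix (Fin m) (Fin n) ℤ}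

lemma natAbs_det_submatrix_le_maxMinor {k : ℕ} {p : Fin k → Fin m} {q : Fin k → Fin n}
    (hp : Function.Injective p) (hq : Function.Injective q) :
    (A.submatrix p q).det.natAbs ≤ maxMinor A k :=
  Finset.le_sup (f := fun pq : (Fin k → Fin m) × (Fin k → Fin n) =>
    (A.submatrix pq.1 pq.2).det.natAbs) (b := (p, q)) (by simp [hp, hq])

lemma subdetsBoundedBy_sup_maxMinor (A : Matrix (Fin m) (Fin n) ℤ) :
    SubdetsBoundedBy A ((Finset.Iic n).sup (maxMinor A) : ℕ) := by
  intro k p q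
  by_cases hdet : (A.submatrix p q).det = 0
  · simp [hdet]
  have hp := injective_rows_of_det_submatrix_ne_zero hdet
  have hq := injective_columns_of_det_submatrix_ne_zero hdet
  have hk : k ≤ n := by simpa using Fintype.card_le_of_injective q hq
  rw [Int.abs_eq_natAbs]
  exact_mod_cast (natAbs_det_submatrix_le_maxMinor hp hq).trans
    (Finset.le_sup (Finset.mem_Iic.2 hk))

lemma sup_maxMinor_Iic_le_of_ne_zero (hA : A ≠ 0) :
    (Finset.Iic n).sup (maxMinor A) ≤ (Finset.Icc 1 n).sup (maxMinor A) := by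
  refine Finset.sup_le fun k hk => ?_
  rcases k.eq_zero_or_pos with rfl | hpos
  · obtain ⟨i, j, hij⟩ : ∃ i j, A i j ≠ 0 := by
      by_contra! h
      exact hA (ext h)
    calc maxMinor A 0 ≤ 1 := Finset.sup_le fun _ _ => by simp
      _ ≤ (A.submatrix (fun _ : Fin 1 => i) fun _ => j).det.natAbs := by
        rw [det_unique, Nat.one_le_iff_ne_zero]
        exact Int.natAbs_ne_zero.2 hij
      _ ≤ maxMinor A 1 := natAbs_det_submatrix_le_maxMinor
        (Function.injective_of_subsingleton _) (Function.injective_of_subsingleton _)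
      _ ≤ (Finset.Icc 1 n).sup (maxMinor A) :=
        Finset.le_sup (Finset.mem_Icc.2 ⟨le_rfl, j.pos⟩)
  · exact Finset.le_sup (Finset.mem_Icc.2 ⟨hpos, Finset.mem_Iic.1 hk⟩)

lemma mul_sup_maxMinor_Iic_le_of_rank_eq (hrank : (A.map (Int.cast : ℤ → ℚ)).rank = n) :
    n * (Finset.Iic n).sup (maxMinor A) ≤ n * (Finset.Icc 1 n).sup (maxMinor A) := by
  by_cases hA : A = 0
  · have hn : n = 0 := by rw [← hrank, hA, Matrix.map_zero _ Int.cast_zero, rank_zero]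
    simp [hn]
  · exact Nat.mul_le_mul_left n (sup_maxMinor_Iic_le_of_ne_zero hA)

end MaxMinor

-- The supremum includes the empty minor `1`: without it the bound would be `0` for `A = 0`, where
-- an arbitrary non-integral point can be optimal.
theorem stmt9_general {m n : ℕ} (A : Matrix (Fin m) (Fin n) ℤ) (b : Fin m → ℝ) (c : Fin n → ℝ)
    (P : Set (Fin n → ℝ)) (hP : P = {x | ∀ i, (A.map (Int.cast : ℤ → ℝ)).mulVec x i ≤ b i})
    (xs : Fin n → ℝ) (hxsP : xs ∈ P) (hopt : ∀ x ∈ P, ∑ i, c i * x i ≤ ∑ i, c i * xs i)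
    (hfeas : ∃ z : Fin n → ℤ, (fun i => (z i : ℝ)) ∈ P) :
    ∃ z : Fin n → ℤ, (fun i => (z i : ℝ)) ∈ P ∧
      (∀ w : Fin n → ℤ, (fun i => (w i : ℝ)) ∈ P →
        ∑ i, c i * (w i : ℝ) ≤ ∑ i, c i * (z i : ℝ)) ∧
      ‖(fun i => xs i - (z i : ℝ))‖ ≤ (n : ℝ) * (((Finset.Iic n).sup (maxMinor A) : ℕ) : ℝ) := by
  subst hP
  obtain ⟨z, hz, hmax, hnear⟩ :=
    exists_int_optimal_near (subdetsBoundedBy_sup_maxMinor A) hxsP hopt hfeas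
  refine ⟨z, hz, hmax, (pi_norm_le_iff_of_nonneg (by positivity)).2 fun j => ?_⟩
  simpa using hnear j

/-- Cook--Gerards--Schrijver--Tardos proximity theorem. -/
theorem stmt9 {m n : ℕ} (A : Matrix (Fin m) (Fin n) ℤ)
    (hrank : (A.map (Int.cast : ℤ → ℚ)).rank = n)
    (b : Fin m → ℚ) (c : Fin n → ℚ)
    (P : Set (Fin n → ℝ))
    (hP : P = {x | ∀ i, (A.map (Int.cast : ℤ → ℝ)).mulVec x i ≤ (b i : ℝ)})
    (xs : Fin n → ℝ) (hxsP : xs ∈ P)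
    (hvert : xs ∈ Set.extremePoints ℝ P)
    (hopt : ∀ x ∈ P, ∑ i, (c i : ℝ) * x i ≤ ∑ i, (c i : ℝ) * xs i)
    (hfeas : ∃ z : Fin n → ℤ, (fun i => (z i : ℝ)) ∈ P) :
    ∃ z : Fin n → ℤ, (fun i => (z i : ℝ)) ∈ P ∧
      (∀ w : Fin n → ℤ, (fun i => (w i : ℝ)) ∈ P →
        ∑ i, (c i : ℝ) * (w i : ℝ) ≤ ∑ i, (c i : ℝ) * (z i : ℝ)) ∧
      ‖(fun i => xs i - (z i : ℝ))‖ ≤ (n : ℝ) * (((Finset.Icc 1 n).sup (maxMinor A) : ℕ) : ℝ) := by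
  obtain ⟨z, hz, hmax, hnear⟩ :=
    stmt9_general A (fun i => b i) (fun i => c i) P hP xs hxsP hopt hfeas
  exact ⟨z, hz, hmax, hnear.trans (by exact_mod_cast mul_sup_maxMinor_Iic_le_of_rank_eq hrank)⟩
end
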